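/- Let λ : ℂ → ℂ be an entire function of order 1 with λ(-s) = λ(s) or λ(-s) = -λ(s), λ(σ) > 0 for all real σ > 1/2, and such that λ admits a Hadamard product λ(s) = s^m e^A ∏_k (1 - s²/ρ_k²) over its nonzero zeros ±ρ_k. If every zero β+iγ of λ with β > 0 satisfies |γ| > β, then every derivative λ^(k)(0) ≥ 0 and every derivative λ^(k)(σ) > 0 for all real σ > 1/2 and k ≥ 0. -/

import Mathlib

open Filter Topology Polynomial
open scoped ComplexOrder ComplexConjugate

/-- nonneg coefficients -/
def SPNN (p : ℂ[X]) : Prop := ∀ n, 0 ≤ p.coeff n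

lemma SPNN.mul {p q : ℂ[X]} (hp : SPNN p) (hq : SPNN q) : SPNN (p * q) := by
  intro n
  rw [coeff_mul]
  exact Finset.sum_nonneg fun x _ => mul_nonneg (hp _) (hq _)

lemma SPNN.add {p q : ℂ[X]} (hp : SPNN p) (hq : SPNN q) : SPNN (p + q) := by
  intro n
  rw [coeff_add]
  exact add_nonneg (hp _) (hq _)

lemma SPNN.mono {c : ℂ} (hc : 0 ≤ c) (m : ℕ) : SPNN (C c * X ^ m) := by
  intro n
  rw [coeff_C_mul, coeff_X_pow]
  split_ifs <;> simp [hc]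

lemma SPNN.one : SPNN 1 := by
  have := SPNN.mono (c := 1) zero_le_one 0
  simpa using this

lemma SPNN.derivative {p : ℂ[X]} (hp : SPNN p) : SPNN (derivative p) := by
  intro n
  rw [coeff_derivative]
  refine mul_nonneg (hp _) ?_
  have : (0:ℂ) ≤ ((n + 1 : ℕ) : ℂ) := Nat.cast_nonneg _
  simpa using this

lemma SPNN.iteratedDeriv_eq (n : ℕ) : ∀ p : ℂ[X],
    iteratedDeriv n (fun s => p.eval s) = fun s => (Polynomial.derivative^[n] p).eval s := by
  induction n with
  | zero => intro p; simp
  | succ n ih =>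
    intro p
    rw [iteratedDeriv_succ']
    have : deriv (fun s => p.eval s) = fun s => (Polynomial.derivative p).eval s := by
      funext s; simp
    rw [this, ih, Function.iterate_succ_apply]

lemma SPNN.iteratedDeriv_nonneg {p : ℂ[X]} (hp : SPNN p) (n : ℕ) :
    0 ≤ iteratedDeriv n (fun s => p.eval s) 0 := by
  rw [SPNN.iteratedDeriv_eq]
  have h : SPNN (Polynomial.derivative^[n] p) := by
    induction n with
    | zero => simpa
    | succ n ih => rw [Function.iterate_succ_apply']; exact ih.derivative
  have := h 0
  simpa [coeff_zero_eq_eval_zero] using this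

lemma SPNN.multiset : ∀ (n : ℕ) (M : Multiset ℂ), M.card = n → M.map conj = M →
    (∀ a ∈ M, 0 < a.re) → SPNN (M.map (fun a => 1 + C a * X ^ 2)).prod := by
  intro n
  induction n using Nat.strong_induction_on with
  | _ n ih =>
    intro M hn hM hpos
    rcases Multiset.empty_or_exists_mem M with rfl | ⟨a, ha⟩
    · simpa using SPNN.one
    obtain ⟨M', rfl⟩ := Multiset.exists_cons_of_mem ha
    have hapos := hpos a ha
    by_cases hreal : conj a = a
    · have hM' : M'.map conj = M' := by
        rw [Multiset.map_cons, hreal] at hM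
        exact (Multiset.cons_inj_right _).1 hM
      rw [Multiset.map_cons, Multiset.prod_cons]
      refine SPNN.mul (SPNN.one.add (SPNN.mono ?_ 2)) (ih M'.card ?_ M' rfl hM' ?_)
      · rw [Complex.le_def]
        have := (Complex.conj_eq_iff_im).1 hreal
        simp [hapos.le, this]
      · simp at hn; omega
      · exact fun b hb => hpos b (Multiset.mem_cons_of_mem hb)
    · have hmem : conj a ∈ M' := by
        have : conj a ∈ a ::ₘ M' := by
          rw [← hM]; exact Multiset.mem_map_of_mem _ ha
        rcases Multiset.mem_cons.1 this with h | h
        · exact absurd h hreal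
        · exact h
      obtain ⟨M'', rfl⟩ := Multiset.exists_cons_of_mem hmem
      have hM' : M''.map conj = M'' := by
        rw [Multiset.map_cons, Multiset.map_cons, Complex.conj_conj, Multiset.cons_swap] at hM
        exact (Multiset.cons_inj_right _).1 ((Multiset.cons_inj_right _).1 hM)
      rw [Multiset.map_cons, Multiset.prod_cons, Multiset.map_cons, Multiset.prod_cons, ← mul_assoc]
      refine SPNN.mul ?_ (ih M''.card ?_ M'' rfl hM' ?_)
      · have : (1 + C a * X ^ 2) * (1 + C (conj a) * X ^ 2) =
          (1 + C (a + conj a) * X ^ 2) + C (a * conj a) * X ^ 4 := by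
          simp only [C_add, C_mul]; ring
        rw [this]
        refine (SPNN.one.add (SPNN.mono ?_ 2)).add (SPNN.mono ?_ 4)
        · rw [Complex.add_conj]
          exact_mod_cast (by positivity : (0:ℝ) ≤ 2 * a.re)
        · rw [Complex.mul_conj]
          exact_mod_cast Complex.normSq_nonneg a
      · simp at hn; omega
      · exact fun b hb => hpos b (Multiset.mem_cons_of_mem (Multiset.mem_cons_of_mem hb))

lemma sp_log_prod {f : ℕ → ℂ} (t : Finset ℕ)
    (h : ∀ u ⊆ t, ‖∏ k ∈ u, f k - 1‖ ≤ 1 / 2) :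
    Complex.log (∏ k ∈ t, f k) = ∑ k ∈ t, Complex.log (f k) := by
  have key : ∀ z : ℂ, ‖z - 1‖ ≤ 1 / 2 → z ≠ 0 ∧ |z.arg| < Real.pi / 2 := by
    intro z hz
    have h1 := (Complex.abs_re_le_norm (z - 1)).trans hz
    have h2 : 0 < z.re := by
      have := (abs_le.1 h1).1
      simp at this; linarith
    exact ⟨fun h => by simp [h] at h2, Complex.abs_arg_lt_pi_div_two_iff.2 (Or.inl h2)⟩
  induction t using Finset.induction_on with
  | empty => simp
  | insert a s ha ih =>
    rw [Finset.prod_insert ha, Finset.sum_insert ha]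
    have k1 := key _ (by simpa using h {a} (by simp))
    have k2 := key _ (h s (Finset.subset_insert _ _))
    rw [Complex.log_mul k1.1 k2.1, ih fun u hu => h u (hu.trans (Finset.subset_insert _ _))]
    have e1 := abs_lt.1 k1.2
    have e2 := abs_lt.1 k2.2
    constructor <;> linarith [e1.1, e1.2, e2.1, e2.2]

lemma sp_summable {f : ℕ → ℂ} {P : ℂ} (hf : HasProd f P) (hP : P ≠ 0) :
    Summable fun k => ‖f k - 1‖ := by
  have hne : ∀ k, f k ≠ 0 := fun k hk =>
    hP (hf.unique (hasProd_zero_of_exists_eq_zero ⟨k, hk⟩))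
  have hPn : 0 < ‖P‖ := norm_pos_iff.2 hP
  have van : ∀ ε > (0:ℝ), ∃ s : Finset ℕ, ∀ t, Disjoint t s → ‖∏ k ∈ t, f k - 1‖ < ε := by
    intro ε hε
    set η := min (‖P‖ / 2) (ε * ‖P‖ / 4) with hη
    have hη0 : 0 < η := by positivity
    have hη1 : η ≤ ‖P‖ / 2 := min_le_left _ _
    have hη2 : η ≤ ε * ‖P‖ / 4 := min_le_right _ _
    have hf' : Tendsto (fun s : Finset ℕ => ∏ k ∈ s, f k) atTop (𝓝 P) := hf
    obtain ⟨s, hs⟩ := (Metric.tendsto_atTop.1 hf') η hη0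
    refine ⟨s, fun t ht => ?_⟩
    have h1 := hs s le_rfl
    have h2 := hs (t ∪ s) Finset.subset_union_right
    rw [dist_eq_norm] at h1 h2
    rw [Finset.prod_union ht] at h2
    set a := ∏ k ∈ s, f k
    set b := ∏ k ∈ t, f k
    have h3 : ‖P‖ / 2 ≤ ‖a‖ := by
      have := norm_sub_norm_le P a
      rw [norm_sub_rev] at this
      linarith
    have h4 : ‖b - 1‖ * ‖a‖ < 2 * η := by
      rw [← norm_mul]
      calc ‖(b - 1) * a‖ = ‖(b * a - P) - (a - P)‖ := by ring_nf
        _ ≤ ‖b * a - P‖ + ‖a - P‖ := norm_sub_le _ _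
        _ < 2 * η := by linarith
    have h5 : ‖b - 1‖ * (‖P‖ / 2) ≤ ‖b - 1‖ * ‖a‖ := by gcongr
    by_contra hcon
    push Not at hcon
    have : ε * (‖P‖ / 2) ≤ ‖b - 1‖ * (‖P‖ / 2) := by gcongr
    linarith
  have hlog : Summable fun k => Complex.log (f k) := by
    rw [summable_iff_vanishing_norm]
    intro ε hε
    obtain ⟨s, hs⟩ := van (min (1/2) (ε / 2)) (by positivity)
    refine ⟨s, fun t ht => ?_⟩
    have h1 : ∀ u ⊆ t, ‖∏ k ∈ u, f k - 1‖ ≤ 1 / 2 := fun u hu =>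
      ((hs u (Finset.disjoint_of_subset_left hu ht)).trans_le (min_le_left _ _)).le
    rw [← sp_log_prod t h1]
    have h2 := Complex.norm_log_one_add_half_le_self (h1 t le_rfl)
    have h3 := (hs t ht).trans_le (min_le_right _ _)
    rw [add_sub_cancel] at h2
    linarith
  have hn := hlog.norm
  have h0 := hn.tendsto_cofinite_zero.eventually_le_const one_pos
  refine Summable.of_norm_bounded_eventually (hn.mul_left 2) ?_
  filter_upwards [h0] with k hk
  have := Complex.norm_exp_sub_one_le hk
  rw [Complex.exp_log (hne k)] at this
  simpa using this

lemma sp_unif {a : ℕ → ℂ} (ha : Summable fun k => ‖a k‖) {g : ℂ → ℂ} (hg : Continuous g) :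
    TendstoLocallyUniformlyOn (fun (S : Finset ℕ) w => ∏ k ∈ S, (1 + a k * g w))
      (fun w => ∏' k, (1 + a k * g w)) atTop Set.univ := by
  have : HasProdLocallyUniformlyOn (fun k w => 1 + a k * g w)
      (fun w => ∏' k, (1 + a k * g w)) Set.univ := by
    apply hasProdLocallyUniformlyOn_of_forall_compact isOpen_univ
    intro K _ hK
    obtain ⟨M, hM⟩ := hK.exists_bound_of_continuousOn hg.continuousOn
    refine Summable.hasProdUniformlyOn_one_add hK (ha.mul_right M) ?_ ?_
    · refine Eventually.of_forall fun k x hx => ?_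
      rw [norm_mul]
      gcongr
      exact hM x hx
    · intro k; fun_prop
  exact hasProdLocallyUniformlyOn_iff_tendstoLocallyUniformlyOn.1 this

lemma sp_cont {a : ℕ → ℂ} (ha : Summable fun k => ‖a k‖) :
    Continuous fun w : ℂ => ∏' k, (1 + a k * w) := by
  rw [← continuousOn_univ]
  refine (sp_unif ha continuous_id).continuousOn (Frequently.of_forall fun S => ?_)
  simp only [id]
  fun_prop

lemma sp_mult {a : ℕ → ℂ} (ha : Summable fun k => ‖a k‖) (w : ℂ) :
    Multipliable fun k => 1 + a k * w := by
  apply multipliable_one_add_of_summable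
  simpa [norm_mul] using ha.mul_right ‖w‖

lemma sp_split {a : ℕ → ℂ} (ha : Summable fun k => ‖a k‖) {c : ℂ} (hc : c ≠ 0) (T : Finset ℕ)
    (hT : ∀ k, k ∈ T ↔ a k = c) : ∃ H : ℂ → ℂ, Continuous H ∧ H (-1 / c) ≠ 0 ∧
      ∀ w, ∏' k, (1 + a k * w) = (1 + c * w) ^ T.card * H w := by
  classical
  set b : ℕ → ℂ := fun k => if k ∈ T then 0 else a k with hb
  have hbs : Summable fun k => ‖b k‖ := by
    refine Summable.of_nonneg_of_le (fun _ => norm_nonneg _) (fun k => ?_) ha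
    simp only [hb]; split_ifs <;> simp
  refine ⟨fun w => ∏' k, (1 + b k * w), sp_cont hbs, ?_, fun w => ?_⟩
  · apply tprod_one_add_ne_zero_of_summable
    · intro k
      simp only [hb]
      split_ifs with h
      · simp
      · intro h0
        apply h
        rw [hT]
        field_simp at h0
        linear_combination -h0
    · simpa [norm_mul] using hbs.mul_right ‖-1 / c‖
  · have h1 : ∀ k, 1 + a k * w = (if k ∈ T then 1 + c * w else 1) * (1 + b k * w) := by
      intro k
      simp only [hb]
      split_ifs with h
      · rw [(hT k).1 h]; simp
      · simp
    have hp : HasProd (fun k => if k ∈ T then 1 + c * w else 1) ((1 + c * w) ^ T.card) := by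
      have := hasProd_prod_of_ne_finset_one (f := fun k => if k ∈ T then 1 + c * w else 1) (s := T)
        (fun k hk => by simp [hk]) (L := SummationFilter.unconditional ℕ)
      rwa [Finset.prod_congr rfl (fun k hk => if_pos hk), Finset.prod_const] at this
    rw [tprod_congr h1]
    exact (hp.mul (sp_mult hbs w).hasProd).tprod_eq

lemma sp_card {a b : ℕ → ℂ} (ha : Summable fun k => ‖a k‖) (hb : Summable fun k => ‖b k‖)
    (hab : ∀ w, ∏' k, (1 + a k * w) = ∏' k, (1 + b k * w)) {c : ℂ} (hc : c ≠ 0)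
    (T T' : Finset ℕ) (hT : ∀ k, k ∈ T ↔ a k = c) (hT' : ∀ k, k ∈ T' ↔ b k = c) :
    T'.card ≤ T.card := by
  by_contra! hlt
  obtain ⟨H, hH, hH0, hHe⟩ := sp_split ha hc T hT
  obtain ⟨H', hH', hH0', hHe'⟩ := sp_split hb hc T' hT'
  have : H = fun w => (1 + c * w) ^ (T'.card - T.card) * H' w := by
    refine Continuous.ext_on (dense_compl_singleton (-1 / c)) hH (by fun_prop) ?_
    intro w hw
    have hne : 1 + c * w ≠ 0 := by
      intro h
      apply hw
      rw [Set.mem_singleton_iff, eq_div_iff hc]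
      linear_combination h
    have e := hab w
    rw [hHe, hHe', ← Nat.sub_add_cancel hlt.le, pow_add, mul_comm (_ ^ (_ - _)), mul_assoc] at e
    exact mul_left_cancel₀ (pow_ne_zero _ hne) e
  apply hH0
  rw [this]
  have : 1 + c * (-1 / c) = 0 := by field_simp; ring
  simp [this, Nat.sub_ne_zero_of_lt hlt]

lemma sp_tprod_conj (f : ℕ → ℂ) (hf : Multipliable f) :
    conj (∏' k, f k) = ∏' k, conj (f k) :=
  (hf.map_tprod (starRingEnd ℂ) Complex.continuous_conj)

lemma sp_real {Λ : ℂ → ℂ} (hent : Differentiable ℂ Λ)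
    (hpos : ∀ σ : ℝ, 1/2 < σ → 0 < (Λ σ).re ∧ (Λ σ).im = 0) (s : ℂ) :
    conj (Λ (conj s)) = Λ s := by
  have hd : Differentiable ℂ (conj ∘ Λ ∘ conj) := fun x => by
    simpa using (hent (conj x)).conj_conj
  have : conj ∘ Λ ∘ conj = Λ := by
    refine AnalyticOnNhd.eq_of_frequently_eq (𝕜 := ℂ) (z₀ := ((1:ℝ):ℂ))
      (fun x _ => hd.analyticAt x) (fun x _ => hent.analyticAt x) ?_
    have ht : Tendsto (fun x : ℝ => (x : ℂ)) (𝓝[≠] 1) (𝓝[≠] ((1:ℝ):ℂ)) := by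
      refine tendsto_nhdsWithin_of_tendsto_nhds_of_eventually_within _
        (Complex.continuous_ofReal.continuousAt.tendsto.mono_left nhdsWithin_le_nhds) ?_
      filter_upwards [self_mem_nhdsWithin] with x hx
      simpa using hx
    refine ht.frequently (Eventually.frequently ?_)
    have h1 : ∀ᶠ x : ℝ in 𝓝 1, 1/2 < x := lt_mem_nhds (by norm_num)
    filter_upwards [h1.filter_mono nhdsWithin_le_nhds] with x hx
    simp only [Function.comp, Complex.conj_ofReal]
    exact Complex.conj_eq_iff_im.2 (hpos x hx).2
  exact congrFun this s

lemma sp_iter_lim {F : ℕ → ℂ → ℂ} {f : ℂ → ℂ} (hF : ∀ n, Differentiable ℂ (F n))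
    (h : TendstoLocallyUniformlyOn F f atTop Set.univ) (k : ℕ) :
    TendstoLocallyUniformlyOn (fun n => iteratedDeriv k (F n)) (iteratedDeriv k f) atTop
      Set.univ := by
  induction k with
  | zero => simpa using h
  | succ k ih =>
    simp only [iteratedDeriv_succ]
    refine ih.deriv (Eventually.of_forall fun n => ?_) isOpen_univ
    exact ((hF n).contDiff.differentiable_iteratedDeriv k (WithTop.coe_lt_top _)).differentiableOn

lemma sp_nonneg {Λ : ℂ → ℂ} {m : ℕ} {A : ℝ} {a : ℕ → ℂ}
    (ha : Summable fun k => ‖a k‖) (hre : ∀ k, 0 < (a k).re)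
    (hreal : ∀ s, conj (Λ (conj s)) = Λ s)
    (hprod : ∀ s : ℂ, Λ s = s ^ m * Complex.exp (A : ℂ) * ∏' k : ℕ, (1 + a k * s ^ 2)) (n : ℕ) :
    0 ≤ iteratedDeriv n Λ 0 := by
  classical
  have hbs : Summable fun k => ‖conj (a k)‖ := by simpa using ha
  have hsymm : ∀ w, ∏' k, (1 + a k * w) = ∏' k, (1 + conj (a k) * w) := by
    intro w
    by_cases hw : w = 0
    · simp [hw]
    obtain ⟨s, rfl⟩ : ∃ s : ℂ, s ^ 2 = w := IsAlgClosed.exists_pow_nat_eq w two_pos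
    have hs : s ≠ 0 := by rintro rfl; simp at hw
    have h := hreal s
    rw [hprod s, hprod (conj s), map_mul, map_mul, sp_tprod_conj _ (sp_mult ha _)] at h
    simp only [map_pow, map_add, map_mul, map_one, Complex.conj_conj, ← Complex.exp_conj,
      Complex.conj_ofReal] at h
    exact (mul_left_cancel₀ (mul_ne_zero (pow_ne_zero _ hs) (Complex.exp_ne_zero _)) h).symm
  have hfin : ∀ N : ℕ, {k | 1 / ((N : ℝ) + 1) ≤ ‖a k‖}.Finite := by
    intro N
    have := ha.tendsto_cofinite_zero.eventually_lt_const
      (show (0:ℝ) < 1 / ((N : ℝ) + 1) by positivity)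
    simpa [Filter.eventually_cofinite] using this
  set S : ℕ → Finset ℕ := fun N => (hfin N).toFinset with hS
  have hmemS : ∀ N k, k ∈ S N ↔ 1 / ((N : ℝ) + 1) ≤ ‖a k‖ := by intro N k; simp [hS]
  have hSt : Tendsto S atTop atTop := by
    apply tendsto_atTop_finset_of_monotone
    · intro N M hNM k hk
      rw [hmemS] at *
      refine le_trans ?_ hk
      have : (N:ℝ) ≤ M := by exact_mod_cast hNM
      gcongr
    · intro k
      have : 0 < ‖a k‖ := norm_pos_iff.2 fun h => by simpa [h] using hre k
      obtain ⟨N, hN⟩ := exists_nat_one_div_lt this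
      exact ⟨N, (hmemS N k).2 hN.le⟩
  have hM : ∀ N, ((S N).val.map a).map conj = (S N).val.map a := by
    intro N
    rw [Multiset.map_map]
    ext c
    rw [Multiset.count_map, Multiset.count_map, ← Finset.filter_val, ← Finset.filter_val]
    change ((S N).filter _).card = ((S N).filter _).card
    by_cases hc : 1 / ((N : ℝ) + 1) ≤ ‖c‖
    · have hc0 : c ≠ 0 := by
        rintro rfl
        have : (0:ℝ) < 1 / ((N : ℝ) + 1) := by positivity
        simp at hc; linarith
      have h1 : ∀ k, k ∈ (S N).filter (fun k => c = (conj ∘ a) k) ↔ conj (a k) = c := by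
        intro k
        rw [Finset.mem_filter, hmemS, Function.comp, eq_comm (a := c)]
        refine ⟨fun h => h.2, fun h => ⟨?_, h⟩⟩
        rw [← h] at hc; simpa using hc
      have h2 : ∀ k, k ∈ (S N).filter (fun k => c = a k) ↔ a k = c := by
        intro k
        rw [Finset.mem_filter, hmemS, eq_comm (a := c)]
        refine ⟨fun h => h.2, fun h => ⟨?_, h⟩⟩
        rw [← h] at hc; simpa using hc
      exact le_antisymm (sp_card ha hbs hsymm hc0 _ _ h2 h1)
        (sp_card hbs ha (fun w => (hsymm w).symm) hc0 _ _ h1 h2)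
    · rw [Finset.filter_false_of_mem, Finset.filter_false_of_mem]
      · rintro k hk rfl
        exact hc ((hmemS N k).1 hk)
      · rintro k hk rfl
        apply hc
        simpa using (hmemS N k).1 hk
  set p : ℕ → ℂ[X] := fun N =>
    C (Complex.exp (A : ℂ)) * X ^ m * (((S N).val.map a).map (fun a => 1 + C a * X ^ 2)).prod with hp
  have hNN : ∀ N, SPNN (p N) := by
    intro N
    refine SPNN.mul (SPNN.mono ?_ m) (SPNN.multiset _ _ rfl (hM N) ?_)
    · rw [← Complex.ofReal_exp]
      exact_mod_cast (Real.exp_pos A).le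
    · intro b hb
      obtain ⟨k, _, rfl⟩ := Multiset.mem_map.1 hb
      exact hre k
  have hpe : ∀ N s, (p N).eval s =
      s ^ m * Complex.exp (A : ℂ) * ∏ k ∈ S N, (1 + a k * s ^ 2) := by
    intro N s
    have : (((S N).val.map a).map (fun a => 1 + C a * X ^ 2)).prod =
        ∏ k ∈ S N, (1 + C (a k) * X ^ 2) := by
      rw [Multiset.map_map]; rfl
    simp only [hp, this, eval_mul, eval_C, eval_pow, eval_X, eval_prod, eval_add, eval_one]
    ring
  have hlim : TendstoLocallyUniformlyOn (fun N s => (p N).eval s) Λ atTop Set.univ := by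
    have h1 : TendstoLocallyUniformlyOn (fun N s => ∏ k ∈ S N, (1 + a k * s ^ 2))
        (fun s => ∏' k, (1 + a k * s ^ 2)) atTop Set.univ := by
      have := sp_unif ha (g := fun s => s ^ 2) (by fun_prop)
      intro u hu x hx
      obtain ⟨t, ht, h⟩ := this u hu x hx
      exact ⟨t, ht, hSt.eventually h⟩
    have h2 : TendstoLocallyUniformlyOn (fun (_ : ℕ) (s : ℂ) => s ^ m * Complex.exp (A : ℂ))
        (fun s => s ^ m * Complex.exp (A : ℂ)) atTop Set.univ := by
      intro u hu x hx
      exact ⟨Set.univ, Filter.univ_mem, Eventually.of_forall fun _ _ _ => refl_mem_uniformity hu⟩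
    have h3 := h2.mul₀ h1 (by fun_prop)
      (((sp_cont ha).comp (continuous_pow 2)).continuousOn)
    have e1 : Λ = (fun s => s ^ m * Complex.exp (A : ℂ)) * (fun s => ∏' k, (1 + a k * s ^ 2)) := by
      funext s; exact hprod s
    rw [e1]
    convert h3 using 1
    funext N s
    exact hpe N s
  have h4 := (sp_iter_lim (fun N => (p N).differentiable) hlim n).tendsto_at (Set.mem_univ (0:ℂ))
  exact ge_of_tendsto' h4 fun N => (hNN N).iteratedDeriv_nonneg n

lemma sp_pos {Λ : ℂ → ℂ} (hent : Differentiable ℂ Λ) (hnn : ∀ n, 0 ≤ iteratedDeriv n Λ 0)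
    (hinf : {s | Λ s = 0}.Infinite) (hne : Λ 1 ≠ 0) (k : ℕ) (σ : ℝ) (hσ : 0 < σ) :
    0 < iteratedDeriv k Λ σ := by
  have hd : Differentiable ℂ (iteratedDeriv k Λ) :=
    hent.contDiff.differentiable_iteratedDeriv k (WithTop.coe_lt_top _)
  have hit : ∀ n, iteratedDeriv n (iteratedDeriv k Λ) = iteratedDeriv (n + k) Λ := by
    intro n
    simp only [iteratedDeriv_eq_iterate, Function.iterate_add_apply]
  have hs := Complex.hasSum_taylorSeries_of_entire hd 0 (σ : ℂ)
  have hterm : ∀ n : ℕ, 0 ≤ ((n.factorial : ℂ)⁻¹ • ((σ : ℂ) - 0) ^ n •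
      iteratedDeriv n (iteratedDeriv k Λ) 0) := by
    intro n
    rw [hit, smul_eq_mul, smul_eq_mul, sub_zero]
    refine mul_nonneg ?_ (mul_nonneg ?_ (hnn _))
    · have : (0:ℝ) ≤ ((n.factorial : ℝ))⁻¹ := by positivity
      have h' : (0:ℂ) ≤ (((n.factorial : ℝ)⁻¹ : ℝ) : ℂ) := by exact_mod_cast this
      simpa only [Complex.ofReal_inv, Complex.ofReal_natCast] using h'
    · have : (0:ℝ) ≤ σ ^ n := by positivity
      exact_mod_cast this
  have h0 : 0 ≤ iteratedDeriv k Λ σ := hs.nonneg hterm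
  refine lt_of_le_of_ne h0 fun heq => ?_
  rw [← heq] at hs
  have hz := (hasSum_zero_iff_of_nonneg hterm).1 hs
  have hz' : ∀ n, iteratedDeriv (n + k) Λ 0 = 0 := by
    intro n
    have := congrFun hz n
    rw [hit, smul_eq_mul, smul_eq_mul, sub_zero] at this
    simpa [Nat.factorial_ne_zero, hσ.ne'] using this
  set p : ℂ[X] := ∑ n ∈ Finset.range k, C ((n.factorial : ℂ)⁻¹ * iteratedDeriv n Λ 0) * X ^ n with hp
  have hpe : ∀ z, p.eval z = Λ z := by
    intro z
    have h1 := Complex.hasSum_taylorSeries_of_entire hent 0 z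
    have h2 := hasSum_sum_of_ne_finset_zero (f := fun n : ℕ => ((n.factorial : ℂ)⁻¹ • (z - 0) ^ n •
      iteratedDeriv n Λ 0)) (s := Finset.range k) (L := SummationFilter.unconditional ℕ) (by
        intro n hn
        have : k ≤ n := by simpa using hn
        have h3 := hz' (n - k)
        rw [Nat.sub_add_cancel this] at h3
        simp [h3])
    rw [← h2.unique h1, hp, eval_finsetSum]
    refine Finset.sum_congr rfl fun n _ => ?_
    simp only [eval_mul, eval_C, eval_pow, eval_X, smul_eq_mul, sub_zero]
    ring
  have : p = 0 := by
    apply Polynomial.eq_zero_of_infinite_isRoot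
    refine hinf.mono fun s hs => ?_
    simpa [IsRoot, hpe] using hs
  apply hne
  rw [← hpe, this]; simp

theorem superpositivity_from_zero_free_region
    (Λ : ℂ → ℂ) (m : ℕ) (A : ℝ) (ρ : ℕ → ℂ)
    (hent : Differentiable ℂ Λ)
    (horder : ∀ ε : ℝ, 0 < ε → ∃ C : ℝ, ∀ s : ℂ,
      ‖Λ s‖ ≤ C * Real.exp (‖s‖ ^ (1 + ε)))
    (hsym : (∀ s, Λ (-s) = Λ s) ∨ (∀ s, Λ (-s) = -Λ s))
    (hpos : ∀ σ : ℝ, 1/2 < σ → 0 < (Λ σ).re ∧ (Λ σ).im = 0)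
    (hρ : ∀ k, ρ k ≠ 0)
    (hprod : ∀ s : ℂ, Λ s = s ^ m * Complex.exp (A : ℂ) *
      ∏' k : ℕ, (1 - s ^ 2 / (ρ k) ^ 2))
    (hzero : ∀ s : ℂ, Λ s = 0 → 0 < s.re → s.re < |s.im|) :
    (∀ k : ℕ, 0 ≤ (iteratedDeriv k Λ 0).re ∧ (iteratedDeriv k Λ 0).im = 0) ∧
    (∀ k : ℕ, ∀ σ : ℝ, 1/2 < σ →
      0 < (iteratedDeriv k Λ σ).re ∧ (iteratedDeriv k Λ σ).im = 0) := by
  have hz : ∀ k, Λ (ρ k) = 0 := by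
    intro k
    rw [hprod, tprod_of_exists_eq_zero ⟨k, ?_⟩, mul_zero]
    rw [div_self (pow_ne_zero _ (hρ k)), sub_self]
  have hne1 : Λ 1 ≠ 0 := by
    intro h
    have := (hpos 1 (by norm_num)).1
    simp [h] at this
  set a : ℕ → ℂ := fun k => -(ρ k ^ 2)⁻¹ with hadef
  have hfac : ∀ k (s : ℂ), 1 - s ^ 2 / (ρ k) ^ 2 = 1 + a k * s ^ 2 := by
    intro k s; simp only [hadef]; ring
  simp only [hfac] at hprod
  have ha0 : ∀ k, a k ≠ 0 := fun k => by simp [hadef, hρ k]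
  have hre : ∀ k, 0 < (a k).re := by
    intro k
    have h1 : (ρ k ^ 2).re < 0 := by
      have e : (ρ k ^ 2).re = (ρ k).re ^ 2 - (ρ k).im ^ 2 := by
        rw [pow_two, Complex.mul_re]; ring
      rw [e, sub_neg]
      rw [sq_lt_sq]
      rcases lt_trichotomy (ρ k).re 0 with h | h | h
      · have hz' : Λ (-ρ k) = 0 := by
          rcases hsym with h | h <;> simp [h, hz k]
        have := hzero _ hz' (by simpa using h)
        rw [abs_of_neg h]
        simpa using this
      · rw [h, abs_zero, abs_pos]
        intro h'
        exact hρ k (Complex.ext h h')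
      · rw [abs_of_pos h]
        exact hzero _ (hz k) h
    simp only [hadef, Complex.neg_re, Complex.inv_re]
    have h2 : 0 < Complex.normSq (ρ k ^ 2) := Complex.normSq_pos.2 (pow_ne_zero _ (hρ k))
    rw [← neg_div]
    exact div_pos (by linarith) h2
  have ha : Summable fun k => ‖a k‖ := by
    have hnz : ∀ᶠ s in 𝓝[≠] (ρ 0), Λ s ≠ 0 := by
      rcases (hent.analyticAt (ρ 0)).eventually_eq_zero_or_eventually_ne_zero with h | h
      · exfalso
        have : Λ = fun _ => 0 := AnalyticOnNhd.eq_of_eventuallyEq (𝕜 := ℂ) (z₀ := ρ 0)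
          (fun x _ => hent.analyticAt x) (fun x _ => analyticAt_const) h
        exact hne1 (by rw [this])
      · exact h
    have hc : ∀ᶠ s in 𝓝 (ρ 0), Λ s ≠ s ^ m * Complex.exp (A : ℂ) := by
      have : Continuous fun s => Λ s - s ^ m * Complex.exp (A : ℂ) := by
        have := hent.continuous
        fun_prop
      have h := this.continuousAt (x := ρ 0) |>.eventually_ne (y := 0) (by
        simp [hz, hρ])
      filter_upwards [h] with s hs h'
      exact hs (sub_eq_zero.2 h')
    obtain ⟨s, hs1, hs2⟩ := (hnz.and (hc.filter_mono nhdsWithin_le_nhds)).exists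
    have hm : Multipliable fun k => 1 + a k * s ^ 2 := by
      by_contra hm
      apply hs2
      rw [hprod, tprod_eq_one_of_not_multipliable hm, mul_one]
    have hP : ∏' k, (1 + a k * s ^ 2) ≠ 0 := by
      intro h
      apply hs1
      rw [hprod, h, mul_zero]
    have hsum := sp_summable hm.hasProd hP
    have hs0 : s ^ 2 ≠ 0 := by
      intro h
      have hs : s = 0 := by simpa using h
      have hm0 : m ≠ 0 ∨ m = 0 := (em _).symm
      rcases hm0 with hm0 | hm0
      · apply hs1; rw [hprod, hs]; simp [hm0]
      · apply hs2; rw [hprod, hs]; simp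
    simp only [add_sub_cancel_left, norm_mul] at hsum
    exact (summable_mul_right_iff (norm_ne_zero_iff.2 hs0)).1 hsum
  have hnn := sp_nonneg ha hre (sp_real hent hpos) hprod
  have hinf : {s | Λ s = 0}.Infinite := by
    have h1 : (Set.range ρ).Infinite := by
      intro hfin
      have h2 : (Set.range a).Finite := by
        have : Set.range a = (fun z : ℂ => -(z ^ 2)⁻¹) '' Set.range ρ := by
          rw [← Set.range_comp]; rfl
        rw [this]; exact hfin.image _
      have h3 : Tendsto a atTop (𝓝 0) :=
        (Summable.of_norm ha).tendsto_atTop_zero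
      have h4 : (0:ℂ) ∈ Set.range a := h2.isClosed.mem_of_tendsto h3
        (Eventually.of_forall fun k => Set.mem_range_self k)
      obtain ⟨k, hk⟩ := h4
      exact ha0 k hk
    refine h1.mono ?_
    rintro _ ⟨k, rfl⟩
    exact hz k
  refine ⟨fun k => ?_, fun k σ hσ => ?_⟩
  · have := Complex.le_def.1 (hnn k)
    exact ⟨by simpa using this.1, by simpa using this.2.symm⟩
  · have := Complex.lt_def.1 (sp_pos hent hnn hinf hne1 k σ (by linarith))
    exact ⟨by simpa using this.1, by simpa using this.2.symm⟩
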